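/- Let T ∈ (0,∞], 1 < r₁, r₂ < ∞, 1 ≤ q₁ ≤ q₂ ≤ ∞ with (N/2)(1/q₁ - 1/q₂) < 1 and 1/r₁ + (N/2)(1/q₁ - 1/q₂) = 1 + 1/r₂. Then the operator C defined by (Cf)(t) = ∫₀ᵗ e^{(t-s)Δ} f(s) ds is bounded from L^{r₁}(0,T; L^{q₁}(ℝ^N)) to L^{r₂}(0,T; L^{q₂}(ℝ^N)). -/

import Mathlib

open MeasureTheory Real
open scoped ENNReal

noncomputable section

/-- The heat kernel on `ℝ^N`. -/
def heatKernel (N : ℕ) (t : ℝ) (x : EuclideanSpace ℝ (Fin N)) : ℝ :=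
  (4 * π * t) ^ (-(N : ℝ) / 2) * Real.exp (-‖x‖ ^ 2 / (4 * t))

/-- Mixed space-time norm `‖f‖_{L^r(0,T;L^q)}` (with `T ∈ (0,∞]`, time exponent `r` finite). -/
def mixedNorm {N : ℕ} {F : Type*} [NormedAddCommGroup F] (r : ℝ) (q : ℝ≥0∞) (T : ℝ≥0∞)
    (f : ℝ → EuclideanSpace ℝ (Fin N) → F) : ℝ≥0∞ :=
  (∫⁻ t in {t : ℝ | 0 < t ∧ ENNReal.ofReal t < T}, (eLpNorm (f t) q volume) ^ r) ^ (1 / r)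

/-- The operator `C f (t) = ∫₀ᵗ e^{(t-s)Δ} f(s) ds`, realized as convolution with the heat
kernel. -/
def heatOpC {N : ℕ} (f : ℝ → EuclideanSpace ℝ (Fin N) → ℝ) (t : ℝ)
    (x : EuclideanSpace ℝ (Fin N)) : ℝ :=
  ∫ s in Set.Ioo 0 t, ∫ y, heatKernel N (t - s) (x - y) * f s y

/-!
The heat kernel has mass one and is bounded by `(4πτ)^(-N/2)`, so with
`α = (N/2)(1/q₁ - 1/q₂)` Hölder's inequality and Fubini's theorem give
`‖e^{τΔ}g‖_{q₂} ≤ c τ^{-α} ‖g‖_{q₁}`. Minkowski's inequality then bounds `‖Cf(t)‖_{q₂}` by the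
fractional integral of `s ↦ ‖f(s)‖_{q₁}` with kernel `τ₊^{-α}`. This kernel is of weak type
`L^{1/α}`, and the weak Young inequality (Hardy–Littlewood–Sobolev) gives `L^{r₁} → L^{r₂}`: the
kernel is split at a level depending on the height of the function, and the distribution function
of the convolution is integrated by the layer cake formula.

No measurability of `f` in time is available, so neither Minkowski's inequality nor the weak Young
inequality applies directly. For the former, the smoothing estimate is proved for the supremum of
`|e^{τΔ}g|` over balls of radius `√τ` (there the kernel at time `τ` is dominated by the kernel at
time `2τ`), which leaves enough room to insert a jointly measurable majorant. For the latter,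
`s ↦ ‖f(s)‖_{q₁}` is replaced by its largest measurable minorant, which has the same lower integral
against every finite measurable weight.
-/

/-! ### Layer cake formula and weak Lebesgue bounds -/

theorem lintegral_Ioc_rpow {β R : ℝ} (hβ : -1 < β) (hR : 0 ≤ R) :
    ∫⁻ τ in Set.Ioc 0 R, ENNReal.ofReal (τ ^ β) = ENNReal.ofReal (R ^ (β + 1) / (β + 1)) := by
  have hint : IntegrableOn (fun x : ℝ => x ^ β) (Set.Ioc 0 R) :=
    (intervalIntegrable_iff_integrableOn_Ioc_of_le hR).1
      (intervalIntegral.intervalIntegrable_rpow' hβ)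
  rw [← ofReal_integral_eq_lintegral_ofReal hint, ← intervalIntegral.integral_of_le hR,
    integral_rpow (Or.inl hβ), Real.zero_rpow (by linarith), sub_zero]
  exact (ae_restrict_mem measurableSet_Ioc).mono fun x hx => Real.rpow_nonneg hx.1.le _

theorem lintegral_Ioi_rpow {β R : ℝ} (hβ : β < -1) (hR : 0 < R) :
    ∫⁻ τ in Set.Ioi R, ENNReal.ofReal (τ ^ β) = ENNReal.ofReal (-R ^ (β + 1) / (β + 1)) := by
  rw [← ofReal_integral_eq_lintegral_ofReal (integrableOn_Ioi_rpow_of_lt hβ hR),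
    integral_Ioi_rpow_of_lt hβ hR]
  exact (ae_restrict_mem measurableSet_Ioi).mono fun x hx =>
    Real.rpow_nonneg (hR.trans hx).le _

theorem lintegral_indicator_lt_rpow {γ : ℝ} (hγ : 0 < γ) (a : ℝ≥0∞) :
    ∫⁻ l in Set.Ioi (0 : ℝ), {l : ℝ | ENNReal.ofReal l < a}.indicator
      (fun l => ENNReal.ofReal (γ * l ^ (γ - 1))) l = a ^ γ := by
  have hIoc : ∀ b : ℝ, 0 ≤ b → ∫⁻ l in Set.Ioc 0 b, ENNReal.ofReal (γ * l ^ (γ - 1)) =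
      ENNReal.ofReal b ^ γ := by
    intro b hb
    simp_rw [ENNReal.ofReal_mul hγ.le]
    rw [lintegral_const_mul' _ _ ENNReal.ofReal_ne_top, lintegral_Ioc_rpow (by linarith) hb,
      ← ENNReal.ofReal_mul hγ.le, ENNReal.ofReal_rpow_of_nonneg hb hγ.le]
    congr 1
    rw [sub_add_cancel]
    field_simp
  have hmeas : MeasurableSet {l : ℝ | ENNReal.ofReal l < a} :=
    measurableSet_lt ENNReal.measurable_ofReal measurable_const
  rw [setLIntegral_indicator hmeas]
  rcases eq_or_ne a ∞ with rfl | ha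
  · rw [ENNReal.top_rpow_of_pos hγ]
    simp only [ENNReal.ofReal_lt_top, Set.ofPred_true, Set.univ_inter]
    refine ENNReal.eq_top_of_forall_nnreal_le fun r => ?_
    have h := hIoc ((r : ℝ) ^ (1 / γ)) (by positivity)
    rw [ENNReal.ofReal_rpow_of_nonneg (by positivity) hγ.le, ← Real.rpow_mul (by positivity),
      one_div, inv_mul_cancel₀ hγ.ne', Real.rpow_one, ENNReal.ofReal_coe_nnreal] at h
    rw [← h]
    exact lintegral_mono_set Set.Ioc_subset_Ioi_self
  · lift a to NNReal using ha
    have hset : {l : ℝ | ENNReal.ofReal l < a} ∩ Set.Ioi 0 = Set.Ioo 0 (a : ℝ) := by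
      ext l
      simp only [Set.mem_inter_iff, Set.mem_ofPred_eq, Set.mem_Ioi, Set.mem_Ioo]
      rw [and_comm]
      refine and_congr_right fun hl => ?_
      rw [← ENNReal.ofReal_coe_nnreal, ENNReal.ofReal_lt_ofReal_iff_of_nonneg hl.le]
    rw [hset, setLIntegral_congr Ioo_ae_eq_Ioc]
    exact (hIoc a a.2).trans (by rw [ENNReal.ofReal_coe_nnreal])

theorem lintegral_rpow_eq_lintegral_meas_ofReal_lt {X : Type*} [MeasurableSpace X] (μ : Measure X)
    [SFinite μ] {γ : ℝ} (hγ : 0 < γ) {F : X → ℝ≥0∞} (hF : Measurable F) :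
    ∫⁻ x, F x ^ γ ∂μ =
      ∫⁻ l in Set.Ioi (0 : ℝ), μ {x | ENNReal.ofReal l < F x} *
        ENNReal.ofReal (γ * l ^ (γ - 1)) := by
  simp_rw [← lintegral_indicator_lt_rpow hγ]
  have hs : MeasurableSet {z : X × ℝ | ENNReal.ofReal z.2 < F z.1} :=
    measurableSet_lt (ENNReal.measurable_ofReal.comp measurable_snd) (hF.comp measurable_fst)
  rw [lintegral_lintegral_swap]
  · refine lintegral_congr fun l => ?_
    have : ∀ x, {l : ℝ | ENNReal.ofReal l < F x}.indicator
        (fun l => ENNReal.ofReal (γ * l ^ (γ - 1))) l =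
        {x | ENNReal.ofReal l < F x}.indicator
          (fun _ => ENNReal.ofReal (γ * l ^ (γ - 1))) x := fun x => rfl
    simp_rw [this]
    rw [lintegral_indicator (measurableSet_lt measurable_const hF), setLIntegral_const, mul_comm]
  · have : (Function.uncurry fun x l => {l : ℝ | ENNReal.ofReal l < F x}.indicator
        (fun l => ENNReal.ofReal (γ * l ^ (γ - 1))) l) =
        {z : X × ℝ | ENNReal.ofReal z.2 < F z.1}.indicator
          (fun z => ENNReal.ofReal (γ * z.2 ^ (γ - 1))) := by
      ext ⟨x, l⟩; rfl
    rw [this]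
    exact (Measurable.indicator (by fun_prop) hs).aemeasurable

theorem lintegral_rpow_le_of_meas_ofReal_lt_le {X Y : Type*} [MeasurableSpace X]
    [MeasurableSpace Y] {μ : Measure X} {ν : Measure Y} [SFinite μ] [SFinite ν] {p C : ℝ}
    (hp : 1 < p) (hC : 0 ≤ C) {F : X → ℝ≥0∞} {f : Y → ℝ≥0∞} (hF : Measurable F)
    (hf : Measurable f) (h : ∀ l > 0, μ {x | ENNReal.ofReal l < F x} ≤
      ENNReal.ofReal (C * l⁻¹) * ∫⁻ y in {y | ENNReal.ofReal l < f y}, f y ∂ν) :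
    ∫⁻ x, F x ^ p ∂μ ≤ ENNReal.ofReal (C * (p / (p - 1))) * ∫⁻ y, f y ^ p ∂ν := by
  have hp0 : 0 < p := one_pos.trans hp
  have hp1 : 0 < p - 1 := sub_pos.2 hp
  have hlevel : ∀ l, MeasurableSet {y | ENNReal.ofReal l < f y} :=
    fun l => measurableSet_lt measurable_const hf
  have hpow : ∫⁻ y, f y ^ (p - 1) ∂ν.withDensity f = ∫⁻ y, f y ^ p ∂ν := by
    rw [lintegral_withDensity_eq_lintegral_mul _ hf (by fun_prop)]
    refine lintegral_congr fun y => ?_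
    nth_rw 2 [show p = 1 + (p - 1) by ring]
    rw [ENNReal.rpow_add_of_nonneg _ _ zero_le_one hp1.le, ENNReal.rpow_one, Pi.mul_apply]
  calc ∫⁻ x, F x ^ p ∂μ
      = ∫⁻ l in Set.Ioi (0 : ℝ),
          μ {x | ENNReal.ofReal l < F x} * ENNReal.ofReal (p * l ^ (p - 1)) :=
        lintegral_rpow_eq_lintegral_meas_ofReal_lt μ hp0 hF
    _ ≤ ∫⁻ l in Set.Ioi (0 : ℝ), ENNReal.ofReal (C * (p / (p - 1))) *
          (ν.withDensity f {y | ENNReal.ofReal l < f y} *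
            ENNReal.ofReal ((p - 1) * l ^ (p - 1 - 1))) := by
        refine setLIntegral_mono' measurableSet_Ioi fun l hl => ?_
        have hl0 : (0 : ℝ) < l := hl
        have hconst : C * l⁻¹ * (p * l ^ (p - 1)) =
            C * (p / (p - 1)) * ((p - 1) * l ^ (p - 1 - 1)) := by
          rw [Real.rpow_sub_one hl0.ne' (p - 1)]
          field_simp
        grw [h l hl]
        rw [withDensity_apply _ (hlevel l), mul_right_comm, ← ENNReal.ofReal_mul (by positivity),
          hconst, ENNReal.ofReal_mul (by positivity), mul_right_comm, mul_assoc]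
    _ = ENNReal.ofReal (C * (p / (p - 1))) * ∫⁻ y, f y ^ (p - 1) ∂ν.withDensity f := by
        rw [lintegral_const_mul' _ _ ENNReal.ofReal_ne_top,
          ← lintegral_rpow_eq_lintegral_meas_ofReal_lt _ hp1 hf]
    _ = _ := by rw [hpow]

/-- The weak-`L^a` condition `ν {g > l} ≤ A l⁻ᵃ` on the distribution function of `g`, imposed on the
kernels of the weak Young inequality; `A` is the `a`-th power of a bound for the weak quasinorm. -/
def WeakLpBound {Y : Type*} [MeasurableSpace Y] (g : Y → ℝ≥0∞) (a A : ℝ) (ν : Measure Y) : Prop :=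
  ∀ l > 0, ν {y | ENNReal.ofReal l < g y} ≤ ENNReal.ofReal (A * l ^ (-a))

namespace WeakLpBound

variable {Y : Type*} [MeasurableSpace Y] {ν : Measure Y} {g : Y → ℝ≥0∞} {a A : ℝ}

theorem mono_measure {ν' : Measure Y} (h : WeakLpBound g a A ν) (hν : ν' ≤ ν) :
    WeakLpBound g a A ν' :=
  fun l hl => (hν _).trans (h l hl)

theorem comp_measurePreserving {X : Type*} [MeasurableSpace X] {μ : Measure X}
    (h : WeakLpBound g a A ν) (hg : Measurable g) {φ : X → Y} (hφ : MeasurePreserving φ μ ν) :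
    WeakLpBound (g ∘ φ) a A μ := fun l hl =>
  (hφ.measure_preimage (measurableSet_lt measurable_const hg).nullMeasurableSet).trans_le (h l hl)

variable [SFinite ν]

theorem lintegral_lt_le (h : WeakLpBound g a A ν) (hg : Measurable g) (hA : 0 ≤ A) (ha : 1 < a)
    {c : ℝ} (hc : 0 < c) :
    ∫⁻ y in {y | ENNReal.ofReal c < g y}, g y ∂ν ≤
      ENNReal.ofReal (A * (a / (a - 1)) * c ^ (1 - a)) := by
  have ha1 : 0 < a - 1 := sub_pos.2 ha
  set s := {y | ENNReal.ofReal c < g y}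
  have hlow : ∀ l ∈ Set.Ioc 0 c, ν.restrict s {y | ENNReal.ofReal l < g y} ≤
      ENNReal.ofReal (A * c ^ (-a)) := fun l _ =>
    (measure_mono (Set.subset_univ _)).trans
      ((Measure.restrict_apply_univ s).trans_le (h c hc))
  have hhigh : ∀ l ∈ Set.Ioi c, ν.restrict s {y | ENNReal.ofReal l < g y} ≤
      ENNReal.ofReal A * ENNReal.ofReal (l ^ (-a)) := fun l hl =>
    (Measure.restrict_apply_le _ _).trans
      ((h l (hc.trans hl)).trans_eq (ENNReal.ofReal_mul hA))
  calc ∫⁻ y in s, g y ∂ν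
      = ∫⁻ l in Set.Ioi 0, ν.restrict s {y | ENNReal.ofReal l < g y} := by
        simpa using lintegral_rpow_eq_lintegral_meas_ofReal_lt (ν.restrict s) one_pos hg
    _ = (∫⁻ l in Set.Ioc 0 c, ν.restrict s {y | ENNReal.ofReal l < g y}) +
          ∫⁻ l in Set.Ioi c, ν.restrict s {y | ENNReal.ofReal l < g y} := by
        rw [← Set.Ioc_union_Ioi_eq_Ioi hc.le,
          lintegral_union measurableSet_Ioi (Set.Ioc_disjoint_Ioi le_rfl)]
    _ ≤ (∫⁻ _ in Set.Ioc 0 c, ENNReal.ofReal (A * c ^ (-a))) +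
          ∫⁻ l in Set.Ioi c, ENNReal.ofReal A * ENNReal.ofReal (l ^ (-a)) :=
        add_le_add (setLIntegral_mono' measurableSet_Ioc hlow)
          (setLIntegral_mono' measurableSet_Ioi hhigh)
    _ = ENNReal.ofReal (A * c ^ (-a) * c + A * (-c ^ (-a + 1) / (-a + 1))) := by
        rw [setLIntegral_const, Real.volume_Ioc, lintegral_const_mul' _ _ ENNReal.ofReal_ne_top,
          lintegral_Ioi_rpow (by linarith) hc, sub_zero, ← ENNReal.ofReal_mul (by positivity),
          ← ENNReal.ofReal_mul hA, ← ENNReal.ofReal_add (by positivity)]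
        rw [neg_div, ← div_neg]
        have : 0 < -(-a + 1) := by linarith
        positivity
    _ = ENNReal.ofReal (A * (a / (a - 1)) * c ^ (1 - a)) := by
        have hpow : c ^ (1 - a) = c ^ (-a) * c := by
          rw [← Real.rpow_add_one hc.ne', neg_add_eq_sub]
        have hne : -a + 1 ≠ 0 := by linarith
        rw [neg_add_eq_sub, hpow]
        rw [neg_add_eq_sub] at hne
        congr 1
        field_simp
        ring

theorem lintegral_rpow_compl_le (h : WeakLpBound g a A ν) (hg : Measurable g) (hA : 0 ≤ A) {r : ℝ}
    (hr : 0 < r) (har : a < r) {c : ℝ} (hc : 0 < c) :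
    ∫⁻ y in {y | ENNReal.ofReal c < g y}ᶜ, g y ^ r ∂ν ≤
      ENNReal.ofReal (A * (r / (r - a)) * c ^ (r - a)) := by
  have hs : MeasurableSet {y | ENNReal.ofReal c < g y} := measurableSet_lt measurable_const hg
  set s := {y | ENNReal.ofReal c < g y}
  have hlow : ∀ l ∈ Set.Ioc 0 c, ν.restrict sᶜ {y | ENNReal.ofReal l < g y} *
      ENNReal.ofReal (r * l ^ (r - 1)) ≤
        ENNReal.ofReal (A * r) * ENNReal.ofReal (l ^ (r - 1 - a)) := by
    intro l hl
    grw [Measure.restrict_apply_le, h l hl.1, ← ENNReal.ofReal_mul' (by have := hl.1; positivity),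
      ← ENNReal.ofReal_mul (by positivity), sub_eq_add_neg _ a, Real.rpow_add hl.1]
    exact le_of_eq (by ring_nf)
  have hhigh : ∀ l ∈ Set.Ioi c, ν.restrict sᶜ {y | ENNReal.ofReal l < g y} *
      ENNReal.ofReal (r * l ^ (r - 1)) = 0 := by
    intro l hl
    rw [Measure.restrict_apply (measurableSet_lt measurable_const hg),
      Set.disjoint_iff_inter_eq_empty.1, measure_empty, zero_mul]
    exact Set.disjoint_compl_right_iff_subset.2 fun y (hy : _ < _) =>
      (ENNReal.ofReal_le_ofReal (le_of_lt hl)).trans_lt hy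
  calc ∫⁻ y in sᶜ, g y ^ r ∂ν
      = (∫⁻ l in Set.Ioc 0 c, ν.restrict sᶜ {y | ENNReal.ofReal l < g y} *
          ENNReal.ofReal (r * l ^ (r - 1))) + ∫⁻ l in Set.Ioi c,
          ν.restrict sᶜ {y | ENNReal.ofReal l < g y} * ENNReal.ofReal (r * l ^ (r - 1)) := by
        rw [lintegral_rpow_eq_lintegral_meas_ofReal_lt _ hr hg, ← Set.Ioc_union_Ioi_eq_Ioi hc.le,
          lintegral_union measurableSet_Ioi (Set.Ioc_disjoint_Ioi le_rfl)]
    _ ≤ (∫⁻ l in Set.Ioc 0 c, ENNReal.ofReal (A * r) * ENNReal.ofReal (l ^ (r - 1 - a))) +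
          ∫⁻ _ in Set.Ioi c, 0 :=
        add_le_add (setLIntegral_mono' measurableSet_Ioc hlow)
          (setLIntegral_mono' measurableSet_Ioi fun l hl => (hhigh l hl).le)
    _ = ENNReal.ofReal (A * (r / (r - a)) * c ^ (r - a)) := by
        rw [lintegral_const_mul' _ _ ENNReal.ofReal_ne_top,
          lintegral_Ioc_rpow (by linarith) hc.le, lintegral_zero, add_zero,
          ← ENNReal.ofReal_mul (by positivity), sub_right_comm, sub_add_cancel]
        congr 1
        ring

end WeakLpBound

/-! ### The weak Young inequality -/

theorem lintegral_const_mul_rpow_rpow_one_div {X : Type*} [MeasurableSpace X]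
    {μ : Measure X} {q : ℝ} (hq : 0 < q) {k : ℝ≥0∞} (hk : k ≠ ∞)
    (F : X → ℝ≥0∞) :
    (∫⁻ x, (k * F x) ^ q ∂μ) ^ (1 / q) = k * (∫⁻ x, F x ^ q ∂μ) ^ (1 / q) := by
  simp_rw [ENNReal.mul_rpow_of_nonneg _ _ hq.le]
  rw [lintegral_const_mul' _ _ (ENNReal.rpow_ne_top_of_nonneg hq.le hk),
    ENNReal.mul_rpow_of_nonneg _ _ (by positivity), ← ENNReal.rpow_mul, mul_one_div_cancel hq.ne',
    ENNReal.rpow_one]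

theorem lintegral_rpow_le_of_meas_ofReal_mul_rpow_lt_le {X Y : Type*} [MeasurableSpace X]
    [MeasurableSpace Y] {μ : Measure X} {ν : Measure Y} [SFinite μ] [SFinite ν] {p q A B : ℝ}
    (hp : 1 < p) (hq : 0 < q) (hA : 0 ≤ A) (hB : 0 < B) {F : X → ℝ≥0∞} {f : Y → ℝ≥0∞}
    (hF : Measurable F) (hf : Measurable f)
    (h : ∀ l > 0, μ {x | ENNReal.ofReal (B * l ^ (p / q)) < F x} ≤
      ENNReal.ofReal (A * l⁻¹) * ∫⁻ y in {y | ENNReal.ofReal l < f y}, f y ∂ν) :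
    (∫⁻ x, F x ^ q ∂μ) ^ (1 / q) ≤
      ENNReal.ofReal (B * (A * (p / (p - 1))) ^ (1 / q)) * (∫⁻ y, f y ^ p ∂ν) ^ (1 / q) := by
  have hp0 : 0 < p := one_pos.trans hp
  have hB0 : ENNReal.ofReal B ≠ 0 := (ENNReal.ofReal_pos.2 hB).ne'
  obtain ⟨G, hG, hFG⟩ : ∃ G : X → ℝ≥0∞, Measurable G ∧ ∀ x, ENNReal.ofReal B * G x = F x :=
    ⟨fun x => (ENNReal.ofReal B)⁻¹ * F x, hF.const_mul _,
      fun x => ENNReal.mul_inv_cancel_left hB0 ENNReal.ofReal_ne_top⟩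
  have hlevel : ∀ l > 0, μ {x | ENNReal.ofReal l < G x ^ (q / p)} ≤
      ENNReal.ofReal (A * l⁻¹) * ∫⁻ y in {y | ENNReal.ofReal l < f y}, f y ∂ν := by
    intro l hl
    refine (measure_mono fun x hx => ?_).trans (h l hl)
    rw [Set.mem_ofPred_eq, ← inv_div, ENNReal.lt_rpow_inv_iff (by positivity)] at hx
    rw [Set.mem_ofPred_eq, ← hFG, ENNReal.ofReal_mul hB.le, ← ENNReal.ofReal_rpow_of_pos hl]
    exact ENNReal.mul_lt_mul_right hB0 ENNReal.ofReal_ne_top hx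
  have hGq := lintegral_rpow_le_of_meas_ofReal_lt_le hp hA (hG.pow_const _) hf hlevel
  simp_rw [← ENNReal.rpow_mul, div_mul_cancel₀ q hp0.ne'] at hGq
  simp_rw [← hFG]
  rw [lintegral_const_mul_rpow_rpow_one_div hq ENNReal.ofReal_ne_top, ENNReal.ofReal_mul hB.le,
    ← ENNReal.ofReal_rpow_of_nonneg (by positivity) (by positivity), mul_assoc,
    ← ENNReal.mul_rpow_of_nonneg _ _ (by positivity)]
  gcongr

theorem exists_measurable_maximal_minorant {X : Type*} [MeasurableSpace X] {μ : Measure X} {r : ℝ}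
    (hr : 0 < r) {w : X → ℝ≥0∞} (hw : ∫⁻ x, w x ^ r ∂μ ≠ ∞) :
    ∃ m, Measurable m ∧ m ≤ w ∧ ∀ u : X → ℝ≥0∞, Measurable u → u ≤ w → u ≤ᵐ[μ] m := by
  obtain ⟨h, hm, hle, hint⟩ := exists_measurable_le_lintegral_eq μ fun x => w x ^ r
  refine ⟨fun x => h x ^ r⁻¹, by fun_prop, fun x => (ENNReal.rpow_inv_le_iff hr).2 (hle x),
    fun u hu huw => ?_⟩
  have hmax : h =ᵐ[μ] fun x => max (h x) (u x ^ r) := by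
    refine ae_eq_of_ae_le_of_lintegral_le (ae_of_all _ fun x => le_max_left _ _) (hint ▸ hw)
      (by fun_prop) ?_
    rw [← hint]
    exact lintegral_mono fun x => max_le (hle x) (ENNReal.rpow_le_rpow (huw x) hr.le)
  filter_upwards [hmax] with x hx
  rw [ENNReal.le_rpow_inv_iff hr, hx]
  exact le_max_right _ _

theorem lintegral_mul_le_of_maximal_minorant {X : Type*} [MeasurableSpace X] {μ : Measure X}
    {k w m : X → ℝ≥0∞} (hk : Measurable k) (hk_top : ∀ x, k x ≠ ∞)
    (hmax : ∀ u : X → ℝ≥0∞, Measurable u → u ≤ w → u ≤ᵐ[μ] m) :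
    ∫⁻ x, k x * w x ∂μ ≤ ∫⁻ x, k x * m x ∂μ := by
  obtain ⟨g, hg, hgle, hint⟩ := exists_measurable_le_lintegral_eq μ fun x => k x * w x
  rw [hint]
  refine lintegral_mono_ae ?_
  filter_upwards [hmax (fun x => g x / k x) (hg.div hk) fun x => ENNReal.div_le_of_le_mul' (hgle x)]
    with x hx
  rcases eq_or_ne (k x) 0 with hk0 | hk0
  · have := hgle x
    simp only [hk0, zero_mul] at this ⊢
    exact this
  · rwa [ENNReal.div_le_iff' hk0 (hk_top x)] at hx

section WeakYoung

variable {X Y : Type*} [MeasurableSpace X] [MeasurableSpace Y] {μ : Measure X} {ν : Measure Y}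
  [SFinite μ] [SFinite ν] {p q a A : ℝ}

theorem setLIntegral_mul_le_of_weakLpBound {g f : Y → ℝ≥0∞} {p' : ℝ} (hpp' : p'.HolderConjugate p)
    (h : WeakLpBound g a A ν) (hA : 0 ≤ A) (hap' : a < p') (hg : Measurable g) (hf : Measurable f)
    (hf1 : ∫⁻ y, f y ^ p ∂ν ≤ 1) {c : ℝ} (hc : 0 < c) :
    ∫⁻ y in {y | ENNReal.ofReal c < g y}ᶜ, g y * f y ∂ν ≤
      ENNReal.ofReal ((A * (p' / (p' - a))) ^ (1 / p') * c ^ (1 - a / p')) := by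
  have hp0 := hpp'.symm.pos
  have hp'0 := hpp'.pos
  refine (ENNReal.lintegral_mul_le_Lp_mul_Lq _ hpp' hg.aemeasurable hf.aemeasurable).trans ?_
  grw [setLIntegral_le_lintegral _ fun y => f y ^ p, hf1, ENNReal.one_rpow, mul_one,
    h.lintegral_rpow_compl_le hg hA hp'0 hap' hc]
  rw [ENNReal.ofReal_rpow_of_nonneg (by positivity) (by positivity),
    Real.mul_rpow (by positivity) (by positivity), ← Real.rpow_mul hc.le, mul_one_div, sub_div,
    div_self hp'0.ne']

theorem setLIntegral_mul_le_of_weakLpBound_of_le {g f : Y → ℝ≥0∞} (h : WeakLpBound g a A ν)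
    (hA : 0 ≤ A) (ha : 1 < a) (hg : Measurable g) {c l : ℝ} (hc : 0 < c) (hl : 0 ≤ l) :
    ∫⁻ y in {y | ENNReal.ofReal c < g y}, g y * {y | ENNReal.ofReal l < f y}ᶜ.indicator f y ∂ν ≤
      ENNReal.ofReal (A * (a / (a - 1)) * c ^ (1 - a) * l) := by
  have hle : ∀ y, {y | ENNReal.ofReal l < f y}ᶜ.indicator f y ≤ ENNReal.ofReal l :=
    Set.indicator_le' (fun y hy => not_lt.1 hy) fun _ _ => zero_le
  rw [ENNReal.ofReal_mul' hl]
  grw [← h.lintegral_lt_le hg hA ha hc, ← lintegral_mul_const _ hg]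
  gcongr
  exact hle _

theorem measurable_setLIntegral_prodMk {s : Set (X × Y)} (hs : MeasurableSet s) {φ : X × Y → ℝ≥0∞}
    (hφ : Measurable φ) : Measurable fun x => ∫⁻ y in Prod.mk x ⁻¹' s, φ (x, y) ∂ν := by
  simp_rw [← lintegral_indicator (measurable_prodMk_left hs)]
  exact (hφ.indicator hs).lintegral_prod_right'

theorem lintegral_lintegral_near_mul_le {K : X → Y → ℝ≥0∞} (hK : Measurable (Function.uncurry K))
    (hcol : ∀ y, WeakLpBound (K · y) a A μ) (hA : 0 ≤ A) (ha : 1 < a) {f : Y → ℝ≥0∞}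
    (hf : Measurable f) {c : ℝ} (hc : 0 < c) :
    ∫⁻ x, ∫⁻ y in {y | ENNReal.ofReal c < K x y}, K x y * f y ∂ν ∂μ ≤
      ENNReal.ofReal (A * (a / (a - 1)) * c ^ (1 - a)) * ∫⁻ y, f y ∂ν := by
  have hs : MeasurableSet {z : X × Y | ENNReal.ofReal c < K z.1 z.2} :=
    measurableSet_lt measurable_const hK
  have hrow : ∀ x, MeasurableSet {y | ENNReal.ofReal c < K x y} := fun x =>
    measurable_prodMk_left hs
  have hcolm : ∀ y, MeasurableSet {x | ENNReal.ofReal c < K x y} := fun y =>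
    measurable_prodMk_right hs
  calc ∫⁻ x, ∫⁻ y in {y | ENNReal.ofReal c < K x y}, K x y * f y ∂ν ∂μ
      = ∫⁻ y, ∫⁻ x in {x | ENNReal.ofReal c < K x y}, K x y * f y ∂μ ∂ν := by
        simp_rw [← lintegral_indicator (hrow _), ← lintegral_indicator (hcolm _)]
        refine lintegral_lintegral_swap (Measurable.aemeasurable ?_)
        exact Measurable.indicator (f := fun z : X × Y => K z.1 z.2 * f z.2)
          (hK.mul (hf.comp measurable_snd)) hs
    _ ≤ ∫⁻ y, ENNReal.ofReal (A * (a / (a - 1)) * c ^ (1 - a)) * f y ∂ν := by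
        gcongr with y
        have hKy : Measurable (K · y) := hK.of_uncurry_right
        rw [lintegral_mul_const _ hKy]
        gcongr
        exact (hcol y).lintegral_lt_le hKy hA ha hc
    _ = _ := lintegral_const_mul _ hf

theorem lintegral_mul_le_add_near_mul_high {g f : Y → ℝ≥0∞} {p' : ℝ}
    (hpp' : p'.HolderConjugate p) (h : WeakLpBound g a A ν) (hA : 0 ≤ A) (ha : 1 < a)
    (hap' : a < p') (hg : Measurable g) (hf : Measurable f) (hf1 : ∫⁻ y, f y ^ p ∂ν ≤ 1) {c l : ℝ}
    (hc : 0 < c) (hl : 0 ≤ l) :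
    ∫⁻ y, g y * f y ∂ν ≤
      ENNReal.ofReal ((A * (p' / (p' - a))) ^ (1 / p') * c ^ (1 - a / p') +
        A * (a / (a - 1)) * c ^ (1 - a) * l) +
      ∫⁻ y in {y | ENNReal.ofReal c < g y},
        g y * {y | ENNReal.ofReal l < f y}.indicator f y ∂ν := by
  have hp'0 := hpp'.pos
  have hs : MeasurableSet {y | ENNReal.ofReal c < g y} := measurableSet_lt measurable_const hg
  have ht : MeasurableSet {y | ENNReal.ofReal l < f y} := measurableSet_lt measurable_const hf
  have hsplit : ∀ y, g y * f y = g y * {y | ENNReal.ofReal l < f y}ᶜ.indicator f y +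
      g y * {y | ENNReal.ofReal l < f y}.indicator f y := fun y => by
    rw [← mul_add, Set.indicator_compl_add_self_apply]
  rw [← lintegral_add_compl _ hs, add_comm, ENNReal.ofReal_add (by positivity) (by positivity),
    add_assoc]
  gcongr
  · exact setLIntegral_mul_le_of_weakLpBound hpp' h hA hap' hg hf hf1 hc
  · simp_rw [hsplit]
    rw [lintegral_add_left (by fun_prop (disch := exact ht.compl))]
    gcongr
    exact setLIntegral_mul_le_of_weakLpBound_of_le h hA ha hg hc hl

theorem div_mul_one_sub_of_holderConjugate {p p' q a : ℝ} (hpp' : p'.HolderConjugate p)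
    (ha : a ≠ 0) (haq : a / q = 1 - a / p') : p / a * (1 - a) = p / q - 1 := by
  have hp0 := hpp'.symm.ne_zero
  have hconj : p'⁻¹ = 1 - p⁻¹ := eq_sub_of_add_eq hpp'.inv_add_inv_eq_one
  have hq : p / q = p / a * (a / q) := by field_simp
  rw [hq, haq, div_eq_mul_inv a p', hconj]
  field_simp
  ring

theorem weakYoung_exponent {p p' q a : ℝ} (hpp' : p'.HolderConjugate p) (hpq : p < q)
    (hscal : 1 / p + 1 / a = 1 + 1 / q) : 1 < a ∧ a < p' ∧ a / q = 1 - a / p' := by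
  have hp0 : 0 < p := hpp'.symm.pos
  have hq0 : 0 < q := hp0.trans hpq
  have hp' : 1 / p' = 1 - 1 / p := by
    simpa only [one_div] using eq_sub_of_add_eq hpp'.inv_add_inv_eq_one
  have hqp : 1 / q < 1 / p := one_div_lt_one_div_of_lt hp0 hpq
  have hp1 : 1 / p < 1 := (div_lt_one hp0).2 hpp'.symm.lt
  have hqpos : 0 < 1 / q := one_div_pos.2 hq0
  have ha0 : 0 < a := one_div_pos.1 (by linarith)
  refine ⟨?_, (one_div_lt_one_div hpp'.pos ha0).1 (by linarith), ?_⟩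
  · exact (one_div_lt_one_div ha0 one_pos).1 (by linarith)
  · have : 1 / q = 1 / a - 1 / p' := by linarith
    rw [div_eq_mul_one_div, this, mul_sub, mul_one_div_cancel ha0.ne', mul_one_div]

/-- The near and far parts of the kernel are separated at height `l ^ (p / a)`, which makes the
two bounded contributions proportional to the same power `l ^ (p / q)`. -/
theorem meas_lt_lintegral_mul_le {p' q : ℝ} (hpp' : p'.HolderConjugate p)
    (haq : a / q = 1 - a / p') {K : X → Y → ℝ≥0∞} (hK : Measurable (Function.uncurry K))
    (hrow : ∀ x, WeakLpBound (K x) a A ν) (hcol : ∀ y, WeakLpBound (K · y) a A μ) (hA : 0 ≤ A)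
    (ha : 1 < a) (hap' : a < p') {f : Y → ℝ≥0∞} (hf : Measurable f)
    (hf1 : ∫⁻ y, f y ^ p ∂ν ≤ 1) {l : ℝ} (hl : 0 < l) :
    μ {x | ENNReal.ofReal (((A * (p' / (p' - a))) ^ (1 / p') + A * (a / (a - 1)) + 1) *
        l ^ (p / q)) < ∫⁻ y, K x y * f y ∂ν} ≤
      ENNReal.ofReal (A * (a / (a - 1)) * l⁻¹) * ∫⁻ y in {y | ENNReal.ofReal l < f y}, f y ∂ν := by
  have ha0 : 0 < a := one_pos.trans ha
  have hp'0 := hpp'.pos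
  have hlevel : MeasurableSet {y | ENNReal.ofReal l < f y} := measurableSet_lt measurable_const hf
  have hfar : (l ^ (p / a)) ^ (1 - a / p') = l ^ (p / q) := by
    rw [← haq, ← Real.rpow_mul hl.le]
    congr 1
    field_simp
  have hnear : (l ^ (p / a)) ^ (1 - a) = l ^ (p / q) * l⁻¹ := by
    rw [← Real.rpow_mul hl.le, div_mul_one_sub_of_holderConjugate hpp' ha0.ne' haq,
      Real.rpow_sub_one hl.ne', div_eq_mul_inv]
  have hcancel : (l ^ (p / q))⁻¹ * (A * (a / (a - 1)) * (l ^ (p / q) * l⁻¹)) =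
      A * (a / (a - 1)) * l⁻¹ := by
    field_simp
  set high : X → ℝ≥0∞ := fun x => ∫⁻ y in {y | ENNReal.ofReal (l ^ (p / a)) < K x y},
    K x y * {y | ENNReal.ofReal l < f y}.indicator f y ∂ν
  have hhigh : Measurable high := measurable_setLIntegral_prodMk (ν := ν)
    (measurableSet_lt measurable_const hK) (hK.mul ((hf.indicator hlevel).comp measurable_snd))
  have hle : ∀ x, ∫⁻ y, K x y * f y ∂ν ≤ ENNReal.ofReal (((A * (p' / (p' - a))) ^ (1 / p') +
      A * (a / (a - 1))) * l ^ (p / q)) + high x := fun x => by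
    have h := lintegral_mul_le_add_near_mul_high hpp' (hrow x) hA ha hap' hK.of_uncurry_left hf hf1
      (Real.rpow_pos_of_pos hl (p / a)) hl.le
    rwa [hfar, hnear, mul_assoc _ (_ * _) l, inv_mul_cancel_right₀ hl.ne', ← add_mul] at h
  calc μ {x | _ < ∫⁻ y, K x y * f y ∂ν}
      ≤ μ {x | ENNReal.ofReal (l ^ (p / q)) ≤ high x} := by
        refine measure_mono fun x hx => ?_
        rw [Set.mem_ofPred_eq, add_mul _ 1, one_mul,
          ENNReal.ofReal_add (by positivity) (by positivity)] at hx
        exact (ENNReal.add_lt_add_iff_left ENNReal.ofReal_ne_top).1 (hx.trans_le (hle x)) |>.le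
    _ ≤ (∫⁻ x, high x ∂μ) / ENNReal.ofReal (l ^ (p / q)) :=
        meas_ge_le_lintegral_div hhigh.aemeasurable (by positivity) ENNReal.ofReal_ne_top
    _ ≤ _ := by
        grw [lintegral_lintegral_near_mul_le hK hcol hA ha (hf.indicator hlevel)
          (Real.rpow_pos_of_pos hl (p / a))]
        rw [hnear, lintegral_indicator hlevel, ENNReal.div_eq_inv_mul, ← mul_assoc,
          ← ENNReal.ofReal_inv_of_pos (by positivity), ← ENNReal.ofReal_mul (by positivity),
          hcancel]

theorem exists_lintegral_lintegral_mul_rpow_le_of_le_one {q : ℝ} (hp : 1 < p) (hpq : p < q)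
    (hscal : 1 / p + 1 / a = 1 + 1 / q) (hA : 0 < A) :
    ∃ C > 0, ∀ K : X → Y → ℝ≥0∞, Measurable (Function.uncurry K) →
      (∀ x, WeakLpBound (K x) a A ν) → (∀ y, WeakLpBound (K · y) a A μ) →
      ∀ f : Y → ℝ≥0∞, Measurable f → ∫⁻ y, f y ^ p ∂ν ≤ 1 →
        (∫⁻ x, (∫⁻ y, K x y * f y ∂ν) ^ q ∂μ) ^ (1 / q) ≤ ENNReal.ofReal C := by
  have hpp' : p.conjExponent.HolderConjugate p := (Real.HolderConjugate.conjExponent hp).symm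
  have hp'0 : 0 < p.conjExponent := hpp'.pos
  obtain ⟨ha, hap', haq⟩ := weakYoung_exponent hpp' hpq hscal
  have hp0 : 0 < p := hpp'.symm.pos
  set A' := A * (a / (a - 1))
  have hA' : 0 < A' := by positivity
  set B := (A * (p.conjExponent / (p.conjExponent - a))) ^ (1 / p.conjExponent) + A' + 1
  have hB : 0 < B := by positivity
  refine ⟨B * (A' * (p / (p - 1))) ^ (1 / q), by positivity, fun K hK hrow hcol f hf hf1 => ?_⟩
  have hF : Measurable fun x => ∫⁻ y, K x y * f y ∂ν :=
    Measurable.lintegral_prod_right' (f := fun z : X × Y => K z.1 z.2 * f z.2)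
      (hK.mul (hf.comp measurable_snd))
  have h := lintegral_rpow_le_of_meas_ofReal_mul_rpow_lt_le hp (hp0.trans hpq) hA'.le hB hF hf
    fun l hl => meas_lt_lintegral_mul_le hpp' haq hK hrow hcol hA.le ha hap' hf hf1 hl
  have hq0 : 0 ≤ 1 / q := one_div_nonneg.2 (hp0.trans hpq).le
  grw [h, hf1, ENNReal.one_rpow, mul_one]

theorem exists_lintegral_lintegral_mul_rpow_le_of_measurable {q : ℝ} (hp : 1 < p) (hpq : p < q)
    (hscal : 1 / p + 1 / a = 1 + 1 / q) (hA : 0 < A) :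
    ∃ C > 0, ∀ K : X → Y → ℝ≥0∞, Measurable (Function.uncurry K) →
      (∀ x, WeakLpBound (K x) a A ν) → (∀ y, WeakLpBound (K · y) a A μ) →
      ∀ f : Y → ℝ≥0∞, Measurable f → (∫⁻ x, (∫⁻ y, K x y * f y ∂ν) ^ q ∂μ) ^ (1 / q) ≤
        ENNReal.ofReal C * (∫⁻ y, f y ^ p ∂ν) ^ (1 / p) := by
  have hp0 : 0 < p := one_pos.trans hp
  have hq0 : 0 < q := hp0.trans hpq
  obtain ⟨C, hC, hle⟩ :=
    exists_lintegral_lintegral_mul_rpow_le_of_le_one (μ := μ) (ν := ν) hp hpq hscal hA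
  refine ⟨C, hC, fun K hK hrow hcol f hf => le_of_forall_gt_imp_ge_of_dense fun b hb => ?_⟩
  have hC0 : ENNReal.ofReal C ≠ 0 := (ENNReal.ofReal_pos.2 hC).ne'
  obtain ⟨c, rfl⟩ : ∃ c, ENNReal.ofReal C * c = b :=
    ⟨b / ENNReal.ofReal C, ENNReal.mul_div_cancel hC0 ENNReal.ofReal_ne_top⟩
  have hfc : (∫⁻ y, f y ^ p ∂ν) ^ (1 / p) < c := lt_of_mul_lt_mul_left' hb
  have hc0 : c ≠ 0 := (zero_le.trans_lt hfc).ne'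
  rcases eq_or_ne c ∞ with rfl | hct
  · rw [ENNReal.mul_top hC0]
    exact le_top
  have hnorm : ∫⁻ y, (c⁻¹ * f y) ^ p ∂ν ≤ 1 := by
    rw [← ENNReal.rpow_le_rpow_iff (one_div_pos.2 hp0), ENNReal.one_rpow,
      lintegral_const_mul_rpow_rpow_one_div hp0 (ENNReal.inv_ne_top.2 hc0)]
    grw [hfc.le, ENNReal.inv_mul_cancel hc0 hct]
  have h := hle K hK hrow hcol _ (hf.const_mul _) hnorm
  simp_rw [mul_left_comm _ c⁻¹] at h
  simp_rw [lintegral_const_mul' _ _ (ENNReal.inv_ne_top.2 hc0)] at h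
  rw [lintegral_const_mul_rpow_rpow_one_div hq0 (ENNReal.inv_ne_top.2 hc0),
    ENNReal.inv_mul_le_iff hc0 hct] at h
  rwa [mul_comm]

/-- Both integrals are lower integrals, as `f` is not assumed to be measurable: `f` is replaced by
its largest measurable minorant. -/
theorem exists_lintegral_lintegral_mul_rpow_le {q : ℝ} (hp : 1 < p) (hpq : p < q)
    (hscal : 1 / p + 1 / a = 1 + 1 / q) (hA : 0 < A) :
    ∃ C > 0, ∀ K : X → Y → ℝ≥0∞, Measurable (Function.uncurry K) → (∀ x y, K x y ≠ ∞) →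
      (∀ x, WeakLpBound (K x) a A ν) → (∀ y, WeakLpBound (K · y) a A μ) →
      ∀ f : Y → ℝ≥0∞, (∫⁻ x, (∫⁻ y, K x y * f y ∂ν) ^ q ∂μ) ^ (1 / q) ≤
        ENNReal.ofReal C * (∫⁻ y, f y ^ p ∂ν) ^ (1 / p) := by
  have hp0 : 0 < p := one_pos.trans hp
  have hq0 : 0 < q := hp0.trans hpq
  obtain ⟨C, hC, hle⟩ :=
    exists_lintegral_lintegral_mul_rpow_le_of_measurable (μ := μ) (ν := ν) hp hpq hscal hA
  refine ⟨C, hC, fun K hK hKtop hrow hcol f => ?_⟩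
  rcases eq_or_ne (∫⁻ y, f y ^ p ∂ν) ∞ with hf | hf
  · rw [hf, ENNReal.top_rpow_of_pos (by positivity), ENNReal.mul_top (by simpa using hC)]
    exact le_top
  obtain ⟨m, hm, hmf, hmax⟩ := exists_measurable_maximal_minorant hp0 hf
  have hKf : ∀ x, ∫⁻ y, K x y * f y ∂ν ≤ ∫⁻ y, K x y * m y ∂ν := fun x =>
    lintegral_mul_le_of_maximal_minorant hK.of_uncurry_left (hKtop x) hmax
  grw [hKf, hle K hK hrow hcol m hm]
  gcongr with y
  exact hmf y

end WeakYoung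

/-! ### The Riemann–Liouville kernel -/

/-- The kernel `τ₊^{-α}` of the Riemann–Liouville fractional integral of order `1 - α`, without
the normalizing factor `1 / Γ(1 - α)`. -/
def riemannLiouvilleKernel (α τ : ℝ) : ℝ≥0∞ :=
  (Set.Ioi (0 : ℝ)).indicator (fun τ => ENNReal.ofReal (τ ^ (-α))) τ

@[fun_prop]
theorem measurable_riemannLiouvilleKernel (α : ℝ) : Measurable (riemannLiouvilleKernel α) :=
  Measurable.indicator (by fun_prop) measurableSet_Ioi

theorem riemannLiouvilleKernel_ne_top (α τ : ℝ) : riemannLiouvilleKernel α τ ≠ ∞ := by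
  rw [riemannLiouvilleKernel, Set.indicator_apply]
  split_ifs <;> simp

theorem weakLpBound_riemannLiouvilleKernel {α : ℝ} (hα : 0 < α) :
    WeakLpBound (riemannLiouvilleKernel α) α⁻¹ 1 volume := by
  intro l hl
  have hsub : {τ | ENNReal.ofReal l < riemannLiouvilleKernel α τ} ⊆ Set.Ioo 0 (l ^ (-α⁻¹)) := by
    intro τ hτ
    rw [Set.mem_ofPred_eq, riemannLiouvilleKernel, Set.indicator_apply] at hτ
    split_ifs at hτ with hτ0
    · rw [ENNReal.ofReal_lt_ofReal_iff_of_nonneg hl.le] at hτ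
      refine ⟨hτ0, ?_⟩
      rwa [← inv_neg, Real.lt_rpow_inv_iff_of_neg hτ0 hl (neg_lt_zero.2 hα)]
    · exact absurd hτ not_lt_zero
  grw [hsub, Real.volume_Ioo, sub_zero, one_mul]

theorem exists_lintegral_riemannLiouvilleKernel_mul_rpow_le {p q α : ℝ} (hp : 1 < p) (hpq : p < q)
    (hscal : 1 / p + α = 1 + 1 / q) (S : Set ℝ) :
    ∃ C > 0, ∀ f : ℝ → ℝ≥0∞,
      (∫⁻ t in S, (∫⁻ s in S, riemannLiouvilleKernel α (t - s) * f s) ^ q) ^ (1 / q) ≤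
        ENNReal.ofReal C * (∫⁻ s in S, f s ^ p) ^ (1 / p) := by
  have hα : 0 < α := by
    have hp1 : 1 / p < 1 := (div_lt_one (one_pos.trans hp)).2 hp
    have hq0 : 0 < 1 / q := one_div_pos.2 (one_pos.trans (hp.trans hpq))
    linarith
  have hk := weakLpBound_riemannLiouvilleKernel hα
  have hkm := measurable_riemannLiouvilleKernel α
  obtain ⟨C, hC, hle⟩ := exists_lintegral_lintegral_mul_rpow_le (μ := volume.restrict S)
    (ν := volume.restrict S) (a := α⁻¹) hp hpq (by rwa [one_div α⁻¹, inv_inv]) one_pos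
  exact ⟨C, hC, hle (fun t s => riemannLiouvilleKernel α (t - s)) (by fun_prop)
    (fun _ _ => riemannLiouvilleKernel_ne_top _ _)
    (fun t => (hk.comp_measurePreserving hkm (volume.measurePreserving_sub_left t)).mono_measure
      Measure.restrict_le_self)
    (fun s => (hk.comp_measurePreserving hkm (measurePreserving_sub_right volume s)).mono_measure
      Measure.restrict_le_self)⟩

/-! ### Minkowski's integral inequality -/

theorem lintegral_mul_rpow_le {X : Type*} [MeasurableSpace X] {μ : Measure X} {p : ℝ} (hp : 1 ≤ p)
    {w g : X → ℝ≥0∞} (hw : AEMeasurable w μ) (hg : AEMeasurable g μ) :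
    (∫⁻ x, w x * g x ∂μ) ^ p ≤ (∫⁻ x, w x ∂μ) ^ (p - 1) * ∫⁻ x, w x * g x ^ p ∂μ := by
  have hp0 : 0 < p := one_pos.trans_le hp
  have hp1 : 0 ≤ 1 - 1 / p := sub_nonneg.2 ((div_le_one hp0).2 hp)
  have hsplit : ∀ x, w x * g x = w x ^ (1 - 1 / p) * (w x * g x ^ p) ^ (1 / p) := by
    intro x
    rw [ENNReal.mul_rpow_of_nonneg _ _ (by positivity), ← ENNReal.rpow_mul,
      mul_one_div_cancel hp0.ne', ENNReal.rpow_one, ← mul_assoc,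
      ← ENNReal.rpow_add_of_nonneg _ _ hp1 (by positivity), sub_add_cancel, ENNReal.rpow_one]
  have hholder : ∫⁻ x, w x * g x ∂μ ≤
      (∫⁻ x, w x ∂μ) ^ (1 - 1 / p) * (∫⁻ x, w x * g x ^ p ∂μ) ^ (1 / p) := by
    simp_rw [hsplit]
    exact ENNReal.lintegral_mul_norm_pow_le hw (hw.mul (hg.pow_const _)) hp1 (by positivity)
      (sub_add_cancel _ _)
  calc (∫⁻ x, w x * g x ∂μ) ^ p
      ≤ ((∫⁻ x, w x ∂μ) ^ (1 - 1 / p) * (∫⁻ x, w x * g x ^ p ∂μ) ^ (1 / p)) ^ p := by gcongr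
    _ = _ := by
        rw [ENNReal.mul_rpow_of_nonneg _ _ hp0.le, ← ENNReal.rpow_mul, ← ENNReal.rpow_mul,
          one_div_mul_cancel hp0.ne', ENNReal.rpow_one, sub_mul, one_mul,
          one_div_mul_cancel hp0.ne']

section Minkowski

variable {X S : Type*} [MeasurableSpace X] [MeasurableSpace S] {ν : Measure X} {μ : Measure S}
  [SFinite ν]

theorem measurable_essSup_prodMk {φ : S → X → ℝ≥0∞} (hφ : Measurable (Function.uncurry φ)) :
    Measurable fun s => essSup (φ s) ν := by
  refine measurable_of_Iic fun c => ?_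
  have hset : (fun s => essSup (φ s) ν) ⁻¹' Set.Iic c = {s | ν {x | c < φ s x} = 0} := by
    ext s
    change essSup (φ s) ν ≤ c ↔ ν {x | c < φ s x} = 0
    rw [show ν {x | c < φ s x} = 0 ↔ ∀ᵐ x ∂ν, φ s x ≤ c by simp only [ae_iff, not_le]]
    exact ⟨fun h => (ENNReal.ae_le_essSup _).mono fun x hx => hx.trans h, essSup_le_of_ae_le c⟩
  rw [hset]
  exact measurableSet_eq_fun
    (measurable_measure_prodMk_left (measurableSet_lt measurable_const hφ)) measurable_const

variable [SFinite μ]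

theorem essSup_lintegral_le {φ : S → X → ℝ≥0∞} (hφ : Measurable (Function.uncurry φ)) :
    essSup (fun x => ∫⁻ s, φ s x ∂μ) ν ≤ ∫⁻ s, essSup (φ s) ν ∂μ := by
  have hle : ∀ᵐ x ∂ν, ∀ᵐ s ∂μ, φ s x ≤ essSup (φ s) ν :=
    (Measure.ae_ae_comm (p := fun s x => φ s x ≤ essSup (φ s) ν) (measurableSet_le hφ
      ((measurable_essSup_prodMk hφ).comp measurable_fst))).1
      (ae_of_all _ fun s => ENNReal.ae_le_essSup _)
  exact essSup_le_of_ae_le _ (hle.mono fun x hx => lintegral_mono_ae hx)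

theorem ae_ae_eq_mul_div {φ : S → X → ℝ≥0∞} {b : S → ℝ≥0∞} (hφ : Measurable (Function.uncurry φ))
    (hb : Measurable b) (hb_top : ∀ᵐ s ∂μ, b s ≠ ∞) (hb_zero : ∀ s, b s = 0 → φ s =ᵐ[ν] 0) :
    ∀ᵐ x ∂ν, ∀ᵐ s ∂μ, φ s x = b s * (φ s x / b s) := by
  have hb' : Measurable fun z : S × X => b z.1 := hb.comp measurable_fst
  refine (Measure.ae_ae_comm (p := fun s x => φ s x = b s * (φ s x / b s))
    (measurableSet_eq_fun hφ (hb'.mul (hφ.div hb')))).1 (hb_top.mono fun s hs => ?_)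
  rcases eq_or_ne (b s) 0 with h0 | h0
  · filter_upwards [hb_zero s h0] with x hx
    rw [hx, h0, zero_mul, Pi.zero_apply]
  · exact ae_of_all _ fun x => (ENNReal.mul_div_cancel h0 hs).symm

theorem lintegral_lintegral_rpow_le {p : ℝ} (hp : 1 ≤ p) {φ : S → X → ℝ≥0∞}
    (hφ : Measurable (Function.uncurry φ)) :
    ∫⁻ x, (∫⁻ s, φ s x ∂μ) ^ p ∂ν ≤ (∫⁻ s, (∫⁻ x, φ s x ^ p ∂ν) ^ (1 / p) ∂μ) ^ p := by
  have hp0 : 0 < p := one_pos.trans_le hp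
  have hφp : Measurable fun z : S × X => φ z.1 z.2 ^ p := hφ.pow_const p
  set b : S → ℝ≥0∞ := fun s => (∫⁻ x, φ s x ^ p ∂ν) ^ (1 / p) with hb_def
  have hb : Measurable b := (Measurable.lintegral_prod_right' hφp).pow_const _
  have hbp : ∀ s, ∫⁻ x, φ s x ^ p ∂ν = b s ^ p := fun s => by
    rw [hb_def, ← ENNReal.rpow_mul, one_div_mul_cancel hp0.ne', ENNReal.rpow_one]
  rcases eq_or_ne (∫⁻ s, b s ∂μ) ∞ with hB | hB
  · simp only [hB, ENNReal.top_rpow_of_pos hp0, le_top]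
  have hfin : ∀ᵐ s ∂μ, b s ≠ ∞ := (ae_lt_top hb hB).mono fun s hs => hs.ne
  have hdiv : Measurable fun z : S × X => φ z.1 z.2 / b z.1 := hφ.div (hb.comp measurable_fst)
  have hzero : ∀ s, b s = 0 → φ s =ᵐ[ν] 0 := by
    intro s h0
    have hint : ∫⁻ x, φ s x ^ p ∂ν = 0 := by rw [hbp, h0, ENNReal.zero_rpow_of_pos hp0]
    rw [lintegral_eq_zero_iff (by fun_prop)] at hint
    exact hint.mono fun x hx => (ENNReal.rpow_eq_zero_iff_of_pos hp0).1 hx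
  have hnorm : ∀ s, ∫⁻ x, b s * (φ s x / b s) ^ p ∂ν ≤ b s := by
    intro s
    simp_rw [ENNReal.div_rpow_of_nonneg _ _ hp0.le, div_eq_mul_inv]
    rw [lintegral_const_mul _ (by fun_prop), lintegral_mul_const _ (by fun_prop), hbp]
    exact mul_le_of_le_one_right' (ENNReal.mul_inv_le_one _)
  calc ∫⁻ x, (∫⁻ s, φ s x ∂μ) ^ p ∂ν
      = ∫⁻ x, (∫⁻ s, b s * (φ s x / b s) ∂μ) ^ p ∂ν :=
        lintegral_congr_ae ((ae_ae_eq_mul_div hφ hb hfin hzero).mono fun x hx => by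
          simp only [lintegral_congr_ae hx])
    _ ≤ ∫⁻ x, (∫⁻ s, b s ∂μ) ^ (p - 1) * ∫⁻ s, b s * (φ s x / b s) ^ p ∂μ ∂ν :=
        lintegral_mono fun x => lintegral_mul_rpow_le hp hb.aemeasurable
          (hdiv.comp measurable_prodMk_right).aemeasurable
    _ = (∫⁻ s, b s ∂μ) ^ (p - 1) * ∫⁻ s, ∫⁻ x, b s * (φ s x / b s) ^ p ∂ν ∂μ := by
        rw [lintegral_const_mul' _ _ (ENNReal.rpow_ne_top_of_nonneg (sub_nonneg.2 hp) hB),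
          lintegral_lintegral_swap (f := fun s x => b s * (φ s x / b s) ^ p)
            ((hb.comp measurable_fst).mul (hdiv.pow_const p)).aemeasurable]
    _ ≤ (∫⁻ s, b s ∂μ) ^ (p - 1) * (∫⁻ s, b s ∂μ) ^ (1 : ℝ) := by
        rw [ENNReal.rpow_one]
        exact mul_le_mul_right (lintegral_mono hnorm) _
    _ = _ := by
        rw [← ENNReal.rpow_add_of_nonneg _ _ (sub_nonneg.2 hp) zero_le_one, sub_add_cancel]

theorem eLpNorm_lintegral_le (q : ℝ≥0∞) (hq : 1 ≤ q) {φ : S → X → ℝ≥0∞}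
    (hφ : Measurable (Function.uncurry φ)) :
    eLpNorm (fun x => ∫⁻ s, φ s x ∂μ) q ν ≤ ∫⁻ s, eLpNorm (φ s) q ν ∂μ := by
  rcases eq_or_ne q ∞ with rfl | hq_top
  · simpa only [eLpNorm_exponent_top, eLpNormEssSup, enorm_eq_self] using essSup_lintegral_le hφ
  have hq0 : q ≠ 0 := (one_pos.trans_le hq).ne'
  have hq1 : 1 ≤ q.toReal := ENNReal.toReal_mono hq_top hq
  simp_rw [eLpNorm_eq_lintegral_rpow_enorm_toReal hq0 hq_top, enorm_eq_self]
  rw [one_div, ENNReal.rpow_inv_le_iff (one_pos.trans_le hq1), ← one_div]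
  exact lintegral_lintegral_rpow_le hq1 hφ

end Minkowski

/-! ### Integrands without joint measurability -/

section LocalMajorant

variable {X S F : Type*} [PseudoMetricSpace X] [SecondCountableTopology X] [MeasurableSpace S]
  {μ : Measure S} [IsSeparable μ] [NormedAddCommGroup F] [SecondCountableTopology F]

theorem exists_countable_dense_integrable (G : X → S → F) :
    ∃ t : Set (X × Lp F 1 μ), t.Countable ∧ (∀ τ ∈ t, τ.2 =ᵐ[μ] G τ.1) ∧
      ∀ x (hx : Integrable (G x) μ), (x, hx.toL1) ∈ closure t := by
  have : Fact ((1 : ℝ≥0∞) ≠ ∞) := ⟨ENNReal.one_ne_top⟩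
  obtain ⟨t, hsub, htc, hdense⟩ :=
    (TopologicalSpace.IsSeparable.of_separableSpace
      {τ : X × Lp F 1 μ | τ.2 =ᵐ[μ] G τ.1}).exists_countable_dense_subset
  exact ⟨t, htc, hsub, fun x hx => hdense hx.coeFn_toL1⟩

variable [MeasurableSpace X] [OpensMeasurableSpace X]

/-- The majorant at `(s, x)` is the supremum over those members of a countable dense family of
pairs `(z, G z) ∈ X × L¹(μ)` with `z ∈ ball x (r s)`: only `G z ∈ L¹` is needed, not the joint
measurability of `G`. -/
theorem exists_measurable_local_majorant (G : X → S → F) {r : S → ℝ} (hr : Measurable r)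
    (hr0 : ∀ᵐ s ∂μ, 0 < r s) :
    ∃ Φ : S → X → ℝ≥0∞, Measurable (Function.uncurry Φ) ∧
      (∀ x, Integrable (G x) μ → ∀ᵐ s ∂μ, ‖G x s‖ₑ ≤ Φ s x) ∧
      ∀ᵐ s ∂μ, ∀ x, Φ s x ≤ ⨆ z ∈ Metric.ball x (r s), ‖G z s‖ₑ := by
  obtain ⟨t, htc, htG, hdense⟩ := exists_countable_dense_integrable (μ := μ) G
  let near : X × Lp F 1 μ → Set (S × X) := fun τ => {z | dist τ.1 z.2 < r z.1}
  have hnear : ∀ τ, MeasurableSet (near τ) := fun τ =>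
    measurableSet_lt (by fun_prop) (hr.comp measurable_fst)
  refine ⟨fun s x => ⨆ τ ∈ t, (near τ).indicator (fun z => ‖τ.2 z.1‖ₑ) (s, x), ?_, ?_, ?_⟩
  · exact Measurable.biSup t htc fun τ _ =>
      ((Lp.stronglyMeasurable τ.2).enorm.comp measurable_fst).indicator (hnear τ)
  · intro x hx
    obtain ⟨τ, hτt, hτ⟩ := mem_closure_iff_seq_limit.1 (hdense x hx)
    obtain ⟨hτ₁, hτ₂⟩ := Prod.tendsto_iff _ _ |>.1 hτ
    obtain ⟨n, hn, hlim⟩ := (tendstoInMeasure_of_tendsto_Lp hτ₂).exists_seq_tendsto_ae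
    filter_upwards [hlim, hx.coeFn_toL1, hr0] with s hs hsG hs0
    rw [hsG] at hs
    refine le_of_tendsto hs.enorm ?_
    filter_upwards [(hτ₁.comp hn.tendsto_atTop).eventually (Metric.ball_mem_nhds x hs0)] with k hk
    refine le_iSup₂_of_le (τ (n k)) (hτt _) ?_
    have hmem : (s, x) ∈ near (τ (n k)) := hk
    rw [Set.indicator_of_mem hmem]
  · filter_upwards [(ae_ball_iff htc).2 htG] with s hs x
    refine iSup₂_le fun τ hτ => Set.indicator_apply_le' (fun hx => ?_) fun _ => zero_le
    rw [hs τ hτ]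
    exact le_iSup₂_of_le τ.1 hx le_rfl

theorem eLpNorm_integral_le_lintegral_of_local_sup_le [NormedSpace ℝ F] {ν : Measure X} [SFinite ν]
    [SFinite μ] (G : X → S → F) {r : S → ℝ} (hr : Measurable r) (hr0 : ∀ᵐ s ∂μ, 0 < r s)
    {q : ℝ≥0∞} (hq : 1 ≤ q) {w : S → ℝ≥0∞}
    (hw : ∀ᵐ s ∂μ, eLpNorm (fun x => ⨆ z ∈ Metric.ball x (r s), ‖G z s‖ₑ) q ν ≤ w s) :
    eLpNorm (fun x => ∫ s, G x s ∂μ) q ν ≤ ∫⁻ s, w s ∂μ := by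
  obtain ⟨Φ, hΦ, hGΦ, hΦG⟩ := exists_measurable_local_majorant G hr hr0
  have hpt : ∀ x, ‖∫ s, G x s ∂μ‖ₑ ≤ ∫⁻ s, Φ s x ∂μ := by
    intro x
    by_cases hx : Integrable (G x) μ
    · exact (enorm_integral_le_lintegral_enorm _).trans (lintegral_mono_ae (hGΦ x hx))
    · simp only [integral_undef hx, enorm_zero, zero_le]
  calc eLpNorm (fun x => ∫ s, G x s ∂μ) q ν ≤ eLpNorm (fun x => ∫⁻ s, Φ s x ∂μ) q ν :=
        eLpNorm_mono_enorm hpt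
    _ ≤ ∫⁻ s, eLpNorm (Φ s) q ν ∂μ := eLpNorm_lintegral_le q hq hΦ
    _ ≤ ∫⁻ s, w s ∂μ := by
        refine lintegral_mono_ae ?_
        filter_upwards [hw, hΦG] with s hs hΦs
        exact (eLpNorm_mono_enorm hΦs).trans hs

end LocalMajorant

/-! ### Integral operators with a bounded kernel of mass at most one -/

section Schur

variable {X Y : Type*} [MeasurableSpace X] [MeasurableSpace Y] {μ : Measure X} {ν : Measure Y}

theorem eLpNorm_rpow_toReal {ε : Type*} [ENorm ε] {p : ℝ≥0∞} (hp : p ≠ 0) (hp_top : p ≠ ∞)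
    (f : X → ε) : eLpNorm f p μ ^ p.toReal = ∫⁻ x, ‖f x‖ₑ ^ p.toReal ∂μ := by
  rw [eLpNorm_eq_lintegral_rpow_enorm_toReal hp hp_top, ← ENNReal.rpow_mul,
    one_div_mul_cancel (ENNReal.toReal_pos hp hp_top).ne', ENNReal.rpow_one]

theorem lintegral_mul_rpow_le_of_lintegral_le_one {p : ℝ} (hp : 1 ≤ p) {w g : Y → ℝ≥0∞}
    (hw : AEMeasurable w ν) (hg : AEMeasurable g ν) (hmass : ∫⁻ y, w y ∂ν ≤ 1) :
    (∫⁻ y, w y * g y ∂ν) ^ p ≤ ∫⁻ y, w y * g y ^ p ∂ν :=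
  (lintegral_mul_rpow_le hp hw hg).trans
    (mul_le_of_le_one_left' (ENNReal.rpow_le_one hmass (sub_nonneg.2 hp)))

theorem lintegral_mul_le_rpow_mul_eLpNorm {κ p : ℝ≥0∞} (hp : 1 ≤ p) (hp_top : p ≠ ∞)
    {w g : Y → ℝ≥0∞} (hw : AEMeasurable w ν) (hg : AEMeasurable g ν) (hmass : ∫⁻ y, w y ∂ν ≤ 1)
    (hwκ : ∀ y, w y ≤ κ) :
    ∫⁻ y, w y * g y ∂ν ≤ κ ^ (1 / p.toReal) * eLpNorm g p ν := by
  have hp1 : 1 ≤ p.toReal := ENNReal.toReal_mono hp_top hp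
  have hp0 : 0 < p.toReal := one_pos.trans_le hp1
  rw [← ENNReal.rpow_le_rpow_iff hp0, ENNReal.mul_rpow_of_nonneg _ _ hp0.le, ← ENNReal.rpow_mul,
    one_div_mul_cancel hp0.ne', ENNReal.rpow_one,
    eLpNorm_rpow_toReal (one_pos.trans_le hp).ne' hp_top]
  calc (∫⁻ y, w y * g y ∂ν) ^ p.toReal ≤ ∫⁻ y, w y * g y ^ p.toReal ∂ν :=
        lintegral_mul_rpow_le_of_lintegral_le_one hp1 hw hg hmass
    _ ≤ ∫⁻ y, κ * g y ^ p.toReal ∂ν := lintegral_mono fun y => mul_le_mul_left (hwκ y) _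
    _ = κ * ∫⁻ y, ‖g y‖ₑ ^ p.toReal ∂ν := lintegral_const_mul'' _ (hg.pow_const _)

variable [SFinite μ] [SFinite ν]

theorem lintegral_lintegral_mul_le {K : X → Y → ℝ≥0∞} (hK : Measurable (Function.uncurry K))
    (hcol : ∀ y, ∫⁻ x, K x y ∂μ ≤ 1) {g : Y → ℝ≥0∞} (hg : AEMeasurable g ν) :
    ∫⁻ x, ∫⁻ y, K x y * g y ∂ν ∂μ ≤ ∫⁻ y, g y ∂ν := by
  rw [lintegral_lintegral_swap (hK.aemeasurable.mul hg.comp_snd)]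
  refine lintegral_mono fun y => ?_
  have hKy : Measurable fun x => K x y := hK.comp measurable_prodMk_right
  rw [lintegral_mul_const _ hKy]
  exact mul_le_of_le_one_left' (hcol y)

theorem eLpNorm_lintegral_mul_le {K : X → Y → ℝ≥0∞} (hK : Measurable (Function.uncurry K))
    {κ : ℝ≥0∞} (hκ : ∀ x y, K x y ≤ κ) (hrow : ∀ x, ∫⁻ y, K x y ∂ν ≤ 1)
    (hcol : ∀ y, ∫⁻ x, K x y ∂μ ≤ 1) {p q : ℝ≥0∞} (hp : 1 ≤ p) (hp_top : p ≠ ∞) (hpq : p ≤ q)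
    {g : Y → ℝ≥0∞} (hg : AEMeasurable g ν) :
    eLpNorm (fun x => ∫⁻ y, K x y * g y ∂ν) q μ ≤
      κ ^ (1 / p.toReal - 1 / q.toReal) * eLpNorm g p ν := by
  have hKx : ∀ x, AEMeasurable (K x) ν := fun x => (hK.comp measurable_prodMk_left).aemeasurable
  set A := eLpNorm g p ν with hA
  have hsup : ∀ x, ∫⁻ y, K x y * g y ∂ν ≤ κ ^ (1 / p.toReal) * A := fun x =>
    lintegral_mul_le_rpow_mul_eLpNorm hp hp_top (hKx x) hg (hrow x) (hκ x)
  rcases eq_or_ne q ∞ with rfl | hq_top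
  · rw [ENNReal.toReal_top, div_zero, sub_zero, eLpNorm_exponent_top]
    exact eLpNormEssSup_le_of_ae_enorm_bound (ae_of_all _ hsup)
  have hp1 : 1 ≤ p.toReal := ENNReal.toReal_mono hp_top hp
  have hpq' : p.toReal ≤ q.toReal := ENNReal.toReal_mono hq_top hpq
  have hp0 : 0 < p.toReal := one_pos.trans_le hp1
  have hq0 : 0 < q.toReal := hp0.trans_le hpq'
  rw [← ENNReal.rpow_le_rpow_iff hq0,
    eLpNorm_rpow_toReal (ENNReal.toReal_pos_iff.1 hq0).1.ne' hq_top]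
  simp only [enorm_eq_self]
  calc ∫⁻ x, (∫⁻ y, K x y * g y ∂ν) ^ q.toReal ∂μ
      ≤ ∫⁻ x, (κ ^ (1 / p.toReal) * A) ^ (q.toReal - p.toReal) *
          ∫⁻ y, K x y * g y ^ p.toReal ∂ν ∂μ := by
        refine lintegral_mono fun x => ?_
        nth_rw 1 [← sub_add_cancel q.toReal p.toReal]
        rw [ENNReal.rpow_add_of_nonneg _ _ (sub_nonneg.2 hpq') hp0.le]
        exact mul_le_mul' (ENNReal.rpow_le_rpow (hsup x) (sub_nonneg.2 hpq'))
          (lintegral_mul_rpow_le_of_lintegral_le_one hp1 (hKx x) hg (hrow x))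
    _ ≤ (κ ^ (1 / p.toReal) * A) ^ (q.toReal - p.toReal) * A ^ p.toReal := by
        have hKg : AEMeasurable (fun z : X × Y => K z.1 z.2 * g z.2 ^ p.toReal) (μ.prod ν) :=
          hK.aemeasurable.mul (hg.pow_const _).comp_snd
        rw [lintegral_const_mul'' _ hKg.lintegral_prod_right', hA,
          eLpNorm_rpow_toReal (one_pos.trans_le hp).ne' hp_top]
        exact mul_le_mul_right (lintegral_lintegral_mul_le hK hcol (hg.pow_const _)) _
    _ = (κ ^ (1 / p.toReal - 1 / q.toReal) * A) ^ q.toReal := by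
        rw [ENNReal.mul_rpow_of_nonneg _ _ (sub_nonneg.2 hpq'),
          ENNReal.mul_rpow_of_nonneg _ _ hq0.le, ← ENNReal.rpow_mul, ← ENNReal.rpow_mul, mul_assoc,
          ← ENNReal.rpow_add_of_nonneg _ _ (sub_nonneg.2 hpq') hp0.le, sub_add_cancel]
        congr 2
        field_simp

end Schur

/-! ### Smoothing by the heat semigroup -/

theorem heatKernel_pos (N : ℕ) {τ : ℝ} (hτ : 0 < τ) (x : EuclideanSpace ℝ (Fin N)) :
    0 < heatKernel N τ x := by
  unfold heatKernel; positivity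

@[fun_prop]
theorem measurable_heatKernel (N : ℕ) (τ : ℝ) : Measurable (heatKernel N τ) := by
  unfold heatKernel; fun_prop

theorem heatKernel_le (N : ℕ) {τ : ℝ} (hτ : 0 < τ) (x : EuclideanSpace ℝ (Fin N)) :
    heatKernel N τ x ≤ (4 * π * τ) ^ (-(N : ℝ) / 2) := by
  unfold heatKernel
  refine mul_le_of_le_one_right (by positivity) (Real.exp_le_one_iff.2 ?_)
  rw [neg_div]
  exact neg_nonpos.2 (by positivity)

theorem lintegral_heatKernel (N : ℕ) {τ : ℝ} (hτ : 0 < τ) :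
    ∫⁻ x, ENNReal.ofReal (heatKernel N τ x) = 1 := by
  have hb : 0 < 1 / (4 * τ) := by positivity
  have hform : ∀ x : EuclideanSpace ℝ (Fin N), heatKernel N τ x =
      (4 * π * τ) ^ (-(N : ℝ) / 2) * Real.exp (-(1 / (4 * τ)) * ‖x‖ ^ 2) := by
    intro x
    unfold heatKernel
    congr 2
    ring
  have hI := GaussianFourier.integral_rexp_neg_mul_sq_norm (V := EuclideanSpace ℝ (Fin N)) hb
  have hval : ∫ x, heatKernel N τ x = 1 := by
    simp_rw [hform]
    rw [integral_const_mul, hI, finrank_euclideanSpace_fin,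
      show π / (1 / (4 * τ)) = 4 * π * τ by field_simp, ← Real.rpow_add (by positivity),
      neg_div, neg_add_cancel, Real.rpow_zero]
  have hint : Integrable (heatKernel N τ) := by
    by_contra hcon
    rw [integral_undef hcon] at hval
    exact zero_ne_one hval
  rw [← ofReal_integral_eq_lintegral_ofReal hint (ae_of_all _ fun x => (heatKernel_pos N hτ x).le),
    hval, ENNReal.ofReal_one]

theorem heatKernel_le_mul_heatKernel (N : ℕ) {τ : ℝ} (hτ : 0 < τ)
    {x x' : EuclideanSpace ℝ (Fin N)} (h : dist x x' ≤ √τ) :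
    heatKernel N τ x' ≤ 2 ^ ((N : ℝ) / 2) * Real.exp (1 / 4) * heatKernel N (2 * τ) x := by
  have hd : ‖x - x'‖ ^ 2 ≤ τ := by
    rw [← dist_eq_norm]
    calc dist x x' ^ 2 ≤ √τ ^ 2 := by gcongr
      _ = τ := Real.sq_sqrt hτ.le
  have htri : ‖x‖ ^ 2 ≤ 2 * ‖x'‖ ^ 2 + 2 * τ := by
    have : ‖x‖ ≤ ‖x'‖ + ‖x - x'‖ := by
      simpa using norm_add_le x' (x - x')
    nlinarith [norm_nonneg x, norm_nonneg x', norm_nonneg (x - x'),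
      sq_nonneg (‖x'‖ - ‖x - x'‖)]
  unfold heatKernel
  have hscale : (4 * π * (2 * τ)) ^ (-(N : ℝ) / 2) =
      2 ^ (-(N : ℝ) / 2) * (4 * π * τ) ^ (-(N : ℝ) / 2) := by
    rw [← Real.mul_rpow (by positivity) (by positivity)]
    congr 1; ring
  have hcancel : (2 : ℝ) ^ ((N : ℝ) / 2) * 2 ^ (-(N : ℝ) / 2) = 1 := by
    rw [← Real.rpow_add two_pos, neg_div, add_neg_cancel, Real.rpow_zero]
  calc _ ≤ (4 * π * τ) ^ (-(N : ℝ) / 2) *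
        (Real.exp (1 / 4) * Real.exp (-‖x‖ ^ 2 / (4 * (2 * τ)))) := by
        rw [← Real.exp_add]
        gcongr
        rw [← sub_nonneg]
        have : 1 / 4 + -‖x‖ ^ 2 / (4 * (2 * τ)) - -‖x'‖ ^ 2 / (4 * τ) =
            (2 * ‖x'‖ ^ 2 + 2 * τ - ‖x‖ ^ 2) / (8 * τ) := by
          field_simp; ring
        rw [this]
        exact div_nonneg (by linarith) (by positivity)
    _ = _ := by
        rw [hscale]
        linear_combination (-(4 * π * τ) ^ (-(N : ℝ) / 2) *
          (Real.exp (1 / 4) * Real.exp (-‖x‖ ^ 2 / (4 * (2 * τ))))) * hcancel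

section HeatSemigroup

variable {N : ℕ}

theorem iSup_ball_enorm_integral_heatKernel_le {τ : ℝ} (hτ : 0 < τ)
    (g : EuclideanSpace ℝ (Fin N) → ℝ) (x : EuclideanSpace ℝ (Fin N)) :
    ⨆ z ∈ Metric.ball x √τ, ‖∫ y, heatKernel N τ (z - y) * g y‖ₑ ≤
      ENNReal.ofReal (2 ^ ((N : ℝ) / 2) * Real.exp (1 / 4)) *
        ∫⁻ y, ENNReal.ofReal (heatKernel N (2 * τ) (x - y)) * ‖g y‖ₑ := by
  refine iSup₂_le fun z hz => (enorm_integral_le_lintegral_enorm _).trans ?_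
  rw [← lintegral_const_mul' _ _ ENNReal.ofReal_ne_top]
  refine lintegral_mono fun y => ?_
  have hdist : dist (x - y) (z - y) ≤ √τ := by
    rw [dist_sub_right, dist_comm]
    exact (Metric.mem_ball.1 hz).le
  rw [enorm_mul, Real.enorm_eq_ofReal (heatKernel_pos N hτ _).le, ← mul_assoc,
    ← ENNReal.ofReal_mul (by positivity)]
  gcongr
  exact heatKernel_le_mul_heatKernel N hτ hdist

theorem integral_heatKernel_mul_of_not_aemeasurable {τ : ℝ} (hτ : 0 < τ)
    {g : EuclideanSpace ℝ (Fin N) → ℝ} (hg : ¬ AEMeasurable g) (z : EuclideanSpace ℝ (Fin N)) :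
    ∫ y, heatKernel N τ (z - y) * g y = 0 := by
  refine integral_undef fun hint => hg ?_
  have hmeas : AEMeasurable fun y => (heatKernel N τ (z - y))⁻¹ * (heatKernel N τ (z - y) * g y) :=
    (by fun_prop : Measurable fun y => (heatKernel N τ (z - y))⁻¹).aemeasurable.mul
      hint.aemeasurable
  simpa only [inv_mul_cancel_left₀ (heatKernel_pos N hτ _).ne'] using hmeas

theorem eLpNorm_lintegral_heatKernel_le {p q : ℝ≥0∞} (hp : 1 ≤ p) (hp_top : p ≠ ∞) (hpq : p ≤ q)
    {τ : ℝ} (hτ : 0 < τ) {g : EuclideanSpace ℝ (Fin N) → ℝ≥0∞} (hg : AEMeasurable g) :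
    eLpNorm (fun x => ∫⁻ y, ENNReal.ofReal (heatKernel N τ (x - y)) * g y) q volume ≤
      ENNReal.ofReal ((4 * π * τ) ^ (-((N : ℝ) / 2 * (1 / p.toReal - 1 / q.toReal)))) *
        eLpNorm g p volume := by
  refine (eLpNorm_lintegral_mul_le (by fun_prop)
    (fun x y => ENNReal.ofReal_le_ofReal (heatKernel_le N hτ (x - y)))
    (fun x => ?_) (fun y => ?_) hp hp_top hpq hg).trans_eq ?_
  · rw [lintegral_sub_left_eq_self (fun y => ENNReal.ofReal (heatKernel N τ y)),
      lintegral_heatKernel N hτ]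
  · rw [lintegral_sub_right_eq_self (fun x => ENNReal.ofReal (heatKernel N τ x)),
      lintegral_heatKernel N hτ]
  · rw [ENNReal.ofReal_rpow_of_pos (by positivity), ← Real.rpow_mul (by positivity)]
    congr 4
    ring

theorem exists_eLpNorm_iSup_ball_integral_heatKernel_le {p q : ℝ≥0∞} (hp : 1 ≤ p) (hp_top : p ≠ ∞)
    (hpq : p ≤ q) : ∃ c > 0, ∀ τ > 0, ∀ g : EuclideanSpace ℝ (Fin N) → ℝ,
      eLpNorm (fun x => ⨆ z ∈ Metric.ball x √τ, ‖∫ y, heatKernel N τ (z - y) * g y‖ₑ) q volume ≤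
        ENNReal.ofReal (c * τ ^ (-((N : ℝ) / 2 * (1 / p.toReal - 1 / q.toReal)))) *
          eLpNorm g p volume := by
  set β : ℝ := (N : ℝ) / 2 * (1 / p.toReal - 1 / q.toReal)
  set C : ℝ := 2 ^ ((N : ℝ) / 2) * Real.exp (1 / 4)
  have hC : 0 < C := by positivity
  refine ⟨C * (8 * π) ^ (-β), by positivity, fun τ hτ g => ?_⟩
  by_cases hg : AEMeasurable g
  · calc _ ≤ ENNReal.ofReal C * eLpNorm (fun x =>
          ∫⁻ y, ENNReal.ofReal (heatKernel N (2 * τ) (x - y)) * ‖g y‖ₑ) q volume :=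
          eLpNorm_le_mul_eLpNorm_of_ae_le_mul'
            (ae_of_all _ (iSup_ball_enorm_integral_heatKernel_le hτ g)) q
      _ ≤ ENNReal.ofReal C * (ENNReal.ofReal ((4 * π * (2 * τ)) ^ (-β)) * eLpNorm g p volume) := by
          gcongr
          exact (eLpNorm_lintegral_heatKernel_le hp hp_top hpq (by positivity) hg.enorm).trans_eq
            (by rw [eLpNorm_enorm])
      _ = ENNReal.ofReal (C * (8 * π) ^ (-β) * τ ^ (-β)) * eLpNorm g p volume := by
          rw [← mul_assoc, ← ENNReal.ofReal_mul hC.le, mul_assoc C,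
            ← Real.mul_rpow (by positivity) hτ.le]
          congr 4
          ring
  · simp [integral_heatKernel_mul_of_not_aemeasurable hτ hg]

end HeatSemigroup

/-! ### The Duhamel operator -/

theorem exists_eLpNorm_heatOpC_le (N : ℕ) {p q : ℝ≥0∞} (hp : 1 ≤ p) (hp_top : p ≠ ∞)
    (hpq : p ≤ q) :
    ∃ c > 0, ∀ (f : ℝ → EuclideanSpace ℝ (Fin N) → ℝ) (t : ℝ),
      eLpNorm (heatOpC f t) q volume ≤ ENNReal.ofReal c *
        ∫⁻ s in Set.Ioo 0 t,
          riemannLiouvilleKernel ((N : ℝ) / 2 * (1 / p.toReal - 1 / q.toReal)) (t - s) *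
            eLpNorm (f s) p volume := by
  obtain ⟨c, hc, hsmooth⟩ := exists_eLpNorm_iSup_ball_integral_heatKernel_le (N := N) hp hp_top hpq
  refine ⟨c, hc, fun f t => ?_⟩
  have hpos : ∀ᵐ s ∂volume.restrict (Set.Ioo 0 t), 0 < t - s :=
    (ae_restrict_mem measurableSet_Ioo).mono fun s hs => sub_pos.2 hs.2
  rw [← lintegral_const_mul' _ _ ENNReal.ofReal_ne_top]
  refine eLpNorm_integral_le_lintegral_of_local_sup_le
    (fun x s => ∫ y, heatKernel N (t - s) (x - y) * f s y) (r := fun s => √(t - s)) (by fun_prop)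
    (hpos.mono fun s hs => Real.sqrt_pos.2 hs) (hp.trans hpq) (hpos.mono fun s hs => ?_)
  rw [riemannLiouvilleKernel, Set.indicator_of_mem (Set.mem_Ioi.2 hs), ← mul_assoc,
    ← ENNReal.ofReal_mul hc.le]
  exact hsmooth (t - s) hs (f s)

theorem mixedNorm_le_of_forall_eLpNorm_le {N : ℕ} {F : Type*} [NormedAddCommGroup F] {r : ℝ}
    (hr : 0 < r) {q T k : ℝ≥0∞} (hk : k ≠ ∞) {g : ℝ → EuclideanSpace ℝ (Fin N) → F}
    {h : ℝ → ℝ → ℝ≥0∞}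
    (hle : ∀ t, eLpNorm (g t) q volume ≤ k * ∫⁻ s in Set.Ioo 0 t, h t s) :
    mixedNorm r q T g ≤ k * (∫⁻ t in {t : ℝ | 0 < t ∧ ENNReal.ofReal t < T},
      (∫⁻ s in {s : ℝ | 0 < s ∧ ENNReal.ofReal s < T}, h t s) ^ r) ^ (1 / r) := by
  set S : Set ℝ := {t : ℝ | 0 < t ∧ ENNReal.ofReal t < T}
  have hS : MeasurableSet S :=
    measurableSet_Ioi.inter (measurableSet_lt ENNReal.measurable_ofReal measurable_const)
  have hpast : ∀ t ∈ S, Set.Ioo 0 t ⊆ S := fun t ht s hs =>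
    ⟨hs.1, (ENNReal.ofReal_le_ofReal hs.2.le).trans_lt ht.2⟩
  rw [← lintegral_const_mul_rpow_rpow_one_div hr hk]
  refine ENNReal.rpow_le_rpow (setLIntegral_mono' hS fun t ht => ?_) (by positivity)
  gcongr
  exact (hle t).trans (mul_le_mul_right (lintegral_mono_set (hpast t ht)) k)

/-- Lemma 3: if `(N/2)(1/q₁ - 1/q₂) < 1` and `1/r₁ + (N/2)(1/q₁ - 1/q₂) = 1 + 1/r₂`, then
`C` is bounded from `L^{r₁}(0,T;L^{q₁})` to `L^{r₂}(0,T;L^{q₂})`. -/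
theorem heatOpC_bounded (N : ℕ) (hN : 0 < N) (T : ℝ≥0∞) (hT : 0 < T)
    (r₁ r₂ : ℝ) (q₁ q₂ : ℝ≥0∞)
    (hr₁ : 1 < r₁) (hr₂ : 1 < r₂) (hq₁ : 1 ≤ q₁) (hq₁₂ : q₁ ≤ q₂)
    (hcond : (N : ℝ) / 2 * (1 / q₁.toReal - 1 / q₂.toReal) < 1)
    (hscal : 1 / r₁ + (N : ℝ) / 2 * (1 / q₁.toReal - 1 / q₂.toReal) = 1 + 1 / r₂) :
    ∃ C > 0, ∀ f : ℝ → EuclideanSpace ℝ (Fin N) → ℝ,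
      mixedNorm r₂ q₂ T (heatOpC f) ≤ ENNReal.ofReal C * mixedNorm r₁ q₁ T f := by
  have hr₁0 : 0 < r₁ := one_pos.trans hr₁
  have hr₂0 : 0 < r₂ := one_pos.trans hr₂
  have hr₁₂ : r₁ < r₂ := (one_div_lt_one_div hr₂0 hr₁0).1 (by linarith)
  have hq₁_top : q₁ ≠ ∞ := by
    rintro rfl
    rw [top_le_iff.1 hq₁₂, sub_self, mul_zero, add_zero] at hscal
    linarith [(div_lt_one hr₁0).2 hr₁, one_div_pos.2 hr₂0]
  obtain ⟨c, hc, hsmooth⟩ := exists_eLpNorm_heatOpC_le N hq₁ hq₁_top hq₁₂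
  obtain ⟨K, hK, hHLS⟩ := exists_lintegral_riemannLiouvilleKernel_mul_rpow_le hr₁ hr₁₂ hscal
    {t : ℝ | 0 < t ∧ ENNReal.ofReal t < T}
  refine ⟨c * K, by positivity, fun f => ?_⟩
  rw [ENNReal.ofReal_mul hc.le, mul_assoc]
  exact (mixedNorm_le_of_forall_eLpNorm_le hr₂0 ENNReal.ofReal_ne_top (hsmooth f)).trans
    (mul_le_mul_right (hHLS _) _)
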